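/- Let Π ⊆ ℝ^d be a nonempty closed convex set, δ ∈ (0,1), r ≥ 0, σ an invertible d×d real matrix, z ∈ ℝ^d, and let 𝔹 = ∏ᵢ [b̲ⁱ, b̄ⁱ] be a box in ℝ^d with b̲ⁱ ≤ b̄ⁱ for each i. Suppose p* ∈ Π and b* ∈ 𝔹 satisfy: (i) σᵀp* is the point of σᵀΠ = { σᵀp : p ∈ Π } nearest to v* = (σ⁻¹(b* − r𝟙) + z)/(1−δ) in Euclidean distance; and (ii) for each coordinate i, if p*ⁱ < 0 then b*ⁱ = b̄ⁱ, and if p*ⁱ > 0 then b*ⁱ = b̲ⁱ. Then (p*, b*) is a saddle point of H(z; ·, ·) on Π × 𝔹: for every p ∈ Π and b ∈ 𝔹, H(z; p, b*) ≤ H(z; p*, b*) ≤ H(z; p*, b). -/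

import Mathlib

open Matrix

/-- Matrix–vector multiplication on Euclidean space. -/
noncomputable def mvE {d : ℕ} (M : Matrix (Fin d) (Fin d) ℝ) (v : EuclideanSpace ℝ (Fin d)) :
    EuclideanSpace ℝ (Fin d) :=
  (WithLp.equiv 2 (Fin d → ℝ)).symm (M.mulVec (WithLp.equiv 2 (Fin d → ℝ) v))

/-- Euclidean dot product `xᵀ y`. -/
noncomputable def dotE {d : ℕ} (x y : EuclideanSpace ℝ (Fin d)) : ℝ := ∑ i, x i * y i

lemma dotE_mvE_transpose {d : ℕ} (M : Matrix (Fin d) (Fin d) ℝ) (x y : EuclideanSpace ℝ (Fin d)) :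
    dotE (mvE Mᵀ x) y = dotE x (mvE M y) := by
  have h1 : dotE (mvE Mᵀ x) y = (Mᵀ *ᵥ x.ofLp) ⬝ᵥ y.ofLp := rfl
  have h2 : dotE x (mvE M y) = x.ofLp ⬝ᵥ (M *ᵥ y.ofLp) := rfl
  rw [h1, h2, Matrix.mulVec_transpose, Matrix.dotProduct_mulVec]

lemma mvE_mul {d : ℕ} (M N : Matrix (Fin d) (Fin d) ℝ) (x : EuclideanSpace ℝ (Fin d)) :
    mvE (M * N) x = mvE M (mvE N x) := by
  simp [mvE, Matrix.mulVec_mulVec]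

lemma mvE_one {d : ℕ} (x : EuclideanSpace ℝ (Fin d)) :
    mvE (1 : Matrix (Fin d) (Fin d) ℝ) x = x := by
  simp [mvE]

lemma dotE_eq_inner {d : ℕ} (x y : EuclideanSpace ℝ (Fin d)) : dotE x y = inner ℝ x y := by
  simp [dotE, PiLp.inner_apply, mul_comm]

/-- if `σᵀp*` is the nearest point of `σᵀΠ` to
`v* = (σ⁻¹(b* − r𝟙) + z)/(1−δ)` and `b*` satisfies the coordinatewise bang-bang
conditions, then `(p*, b*)` is a saddle point of `H(z; ·, ·)` on `Π × 𝔹`,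
where `𝔹 = ∏ᵢ [b̲ⁱ, b̄ⁱ]`. -/
theorem stmt_11 (d : ℕ) (δ r : ℝ) (hδ : δ ∈ Set.Ioo (0 : ℝ) 1) (hr : 0 ≤ r)
    (σ : Matrix (Fin d) (Fin d) ℝ) (hσ : IsUnit σ.det)
    (Pset : Set (EuclideanSpace ℝ (Fin d))) (hPne : Pset.Nonempty)
    (hPclosed : IsClosed Pset) (hPconv : Convex ℝ Pset)
    (z : EuclideanSpace ℝ (Fin d))
    (ones : EuclideanSpace ℝ (Fin d)) (hones : ∀ i, ones i = 1)
    (bl bu : Fin d → ℝ) (hblu : ∀ i, bl i ≤ bu i)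
    (Bset : Set (EuclideanSpace ℝ (Fin d)))
    (hBset : Bset = {b : EuclideanSpace ℝ (Fin d) | ∀ i, b i ∈ Set.Icc (bl i) (bu i)})
    (H : EuclideanSpace ℝ (Fin d) → EuclideanSpace ℝ (Fin d) → ℝ)
    (hH : ∀ p b, H p b = 1 / 2 * δ * (δ - 1) * dotE p (mvE (σ * σᵀ) p)
      + δ * dotE p (b - r • ones) + δ * dotE p (mvE σ z) + δ * r)
    (pstar : EuclideanSpace ℝ (Fin d)) (hpstar : pstar ∈ Pset)
    (bstar : EuclideanSpace ℝ (Fin d)) (hbstar : bstar ∈ Bset)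
    (vstar : EuclideanSpace ℝ (Fin d))
    (hvstar : vstar = (1 / (1 - δ)) • (mvE σ⁻¹ (bstar - r • ones) + z))
    (hproj : ‖mvE σᵀ pstar - vstar‖ = Metric.infDist vstar ((fun p => mvE σᵀ p) '' Pset))
    (hcoord : ∀ i, (pstar i < 0 → bstar i = bu i) ∧ (0 < pstar i → bstar i = bl i)) :
    ∀ p ∈ Pset, ∀ b ∈ Bset, H p bstar ≤ H pstar bstar ∧ H pstar bstar ≤ H pstar b := by
  obtain ⟨hδ0, hδ1⟩ := hδ
  have key : ∀ p, H p bstar = -(1 / 2 * δ * (1 - δ)) * (‖mvE σᵀ p - vstar‖ ^ 2 - ‖vstar‖ ^ 2)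
      + δ * r := by
    intro p
    have h1 : dotE p (mvE (σ * σᵀ) p) = ‖mvE σᵀ p‖ ^ 2 := by
      rw [mvE_mul, ← dotE_mvE_transpose, dotE_eq_inner, real_inner_self_eq_norm_sq]
    have h2 : dotE p (bstar - r • ones) + dotE p (mvE σ z)
        = (1 - δ) * inner ℝ (mvE σᵀ p) vstar := by
      have e : bstar - r • ones = mvE σ (mvE σ⁻¹ (bstar - r • ones)) := by
        rw [← mvE_mul, Matrix.mul_nonsing_inv σ hσ, mvE_one]
      rw [hvstar, inner_smul_right, inner_add_right, ← dotE_eq_inner, ← dotE_eq_inner,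
        dotE_mvE_transpose, dotE_mvE_transpose, ← e]
      have : 1 - δ ≠ 0 := by linarith
      field_simp
    rw [hH, h1, norm_sub_sq_real]
    linear_combination δ * h2
  intro p hp b hb
  constructor
  · rw [key, key]
    have h : ‖mvE σᵀ pstar - vstar‖ ≤ ‖mvE σᵀ p - vstar‖ := by
      rw [hproj, ← dist_eq_norm, dist_comm]
      exact Metric.infDist_le_dist_of_mem ⟨p, hp, rfl⟩
    have h' : ‖mvE σᵀ pstar - vstar‖ ^ 2 ≤ ‖mvE σᵀ p - vstar‖ ^ 2 := by gcongr
    have hc : 0 ≤ 1 / 2 * δ * (1 - δ) := by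
      have : 0 < 1 - δ := by linarith
      positivity
    nlinarith [mul_le_mul_of_nonneg_left h' hc]
  · have h : dotE pstar (bstar - r • ones) ≤ dotE pstar (b - r • ones) := by
      unfold dotE
      refine Finset.sum_le_sum fun i _ => ?_
      simp only [PiLp.sub_apply]
      subst hBset
      have hbi := hb i
      rcases lt_trichotomy (pstar i) 0 with h | h | h
      · have := (hcoord i).1 h
        nlinarith [hbi.2]
      · simp [h]
      · have := (hcoord i).2 h
        nlinarith [hbi.1]
    rw [hH, hH]
    have := mul_le_mul_of_nonneg_left h hδ0.le
    linarith
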